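/- arXiv:1902.01241 — 2 statements merged into one kernel-verified Lean document; each statement's English description precedes it below -/
import Mathlib

section
/- For integers 2 ≤ k ≤ n and 1 ≤ i ≤ ⌊k/2⌋ - 1, the Pieri rule gives h_{n-k} · s_{(k-2i, 2^i)} = Σ_{p=max(0, n-2k+2i+2)}^{n-k} s_{(k+p-2i, n-k-p+2, 2^{i-1})} + Σ_{p=max(0, n-2k+2i+1)}^{n-k-1} s_{(k+p-2i, n-k-p+1, 2^{i-1}, 1)} + Σ_{p=max(0, n-2k+2i)}^{n-k-2} s_{(k+p-2i, n-k-p, 2^i)}. -/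
/-- The Schur function of the sequence `μ` (a partition when `μ` is weakly decreasing),
defined by the Jacobi–Trudi determinant `s_μ = det(h_{μ_i - i + j})`, where `h : ℤ → R`
is the family of complete homogeneous symmetric functions. -/
noncomputable def schurJT {R : Type*} [CommRing R] (h : ℤ → R) {r : ℕ} (μ : Fin r → ℤ) : R :=
  Matrix.det (Matrix.of fun i j : Fin r => h (μ i - (i : ℤ) + (j : ℤ)))

/-!
Let `T c = ∑ b, h (c + b) X ^ b`, so that `T c = h c + X T (c + 1)`, and let `μ` be a partition
padded by a zero part. Replace every `h` in the Jacobi–Trudi matrix of `μ` by `T`.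

Subtracting from each column `X` times the next one turns the determinant into `T 0 · s_μ`, whose
coefficient at `X ^ m` is `h m · s_μ`. Subtracting from each row the right power of `X` times the
previous one truncates row `i` to the terms `h x` with `μ i ≤ x ≤ μ (i - 1)`, and modulo
`X ^ (m + 1)` row `0` may be truncated to `x ≤ μ 0 + m`. Expanding the rows, the coefficient at
`X ^ m` becomes the sum of `s_ν` over the `ν` obtained from `μ` by adding a horizontal strip of
size `m`.
-/

open Finset PowerSeries

section Determinant

variable {R : Type*} [CommRing R]

theorem det_eq_of_forall_col_eq_smul_add_succ {n : ℕ} {A B : Matrix (Fin (n + 1)) (Fin (n + 1)) R}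
    (c : Fin n → R) (hlast : ∀ i, A i (Fin.last n) = B i (Fin.last n))
    (hcast : ∀ i (j : Fin n), A i j.castSucc = B i j.castSucc + c j * A i j.succ) :
    A.det = B.det := by
  rw [← Matrix.det_submatrix_equiv_self Fin.revPerm A,
    ← Matrix.det_submatrix_equiv_self Fin.revPerm B]
  refine Matrix.det_eq_of_forall_col_eq_smul_add_pred (fun j => c j.rev) (fun i => ?_)
    fun i j => ?_
  · simpa using hlast i.rev
  · simpa [Fin.rev_succ, Fin.rev_castSucc] using hcast i.rev j.rev

theorem det_of_last_row_castSucc_eq_zero {n : ℕ} (A : Matrix (Fin (n + 1)) (Fin (n + 1)) R)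
    (hA : ∀ j : Fin n, A (Fin.last n) j.castSucc = 0) :
    A.det = A (Fin.last n) (Fin.last n) * (A.submatrix Fin.castSucc Fin.castSucc).det := by
  rw [Matrix.det_succ_row A (Fin.last n), Fin.sum_univ_castSucc]
  simp [hA, Fin.succAbove_last, (Even.add_self n).neg_one_pow]

theorem dvd_det_sub_det {n : Type*} [Fintype n] [DecidableEq n] {d : R} {A B : Matrix n n R}
    (hAB : ∀ i j, d ∣ A i j - B i j) : d ∣ A.det - B.det := by
  simp only [← Ideal.mem_span_singleton, ← Ideal.Quotient.eq] at hAB ⊢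
  rw [RingHom.map_det, RingHom.map_det]
  congr 1
  ext i j
  exact hAB i j

theorem det_of_sum_rows {n ι : Type*} [Fintype n] [DecidableEq n]
    (s : n → Finset ι) (v : n → ι → n → R) :
    (Matrix.of fun i j => ∑ x ∈ s i, v i x j).det =
      ∑ f ∈ Fintype.piFinset s, (Matrix.of fun i j => v i (f i) j).det := by
  have hrows : (fun i j => ∑ x ∈ s i, v i x j) = fun i => ∑ x ∈ s i, v i x := by
    ext i j
    rw [Finset.sum_apply]
  rw [hrows]
  exact (Matrix.detRowAlternating (R := R) (n := n)).toMultilinearMap.map_sum_finset v s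

end Determinant

section TailSeries

variable {R : Type*} [CommRing R] (h : ℤ → R)

/-- The generating series `∑ b, h (c + b) X ^ b` of the family `h` from index `c` on; for `c = 0`
it is the generating series of the complete homogeneous symmetric functions. -/
noncomputable def tailSeries (c : ℤ) : R⟦X⟧ :=
  PowerSeries.mk fun b => h (c + b)

theorem tailSeries_eq_C_add_X_mul (c : ℤ) :
    tailSeries h c = C (h c) + X * tailSeries h (c + 1) := by
  ext d
  cases d with
  | zero => simp [tailSeries]
  | succ d => simp [tailSeries, coeff_succ_X_mul, add_assoc, add_comm (1 : ℤ)]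

theorem tailSeries_eq_sum_range_add (c : ℤ) (l : ℕ) :
    tailSeries h c = ∑ q ∈ range l, X ^ q * C (h (c + q)) + X ^ l * tailSeries h (c + l) := by
  induction l with
  | zero => simp
  | succ l ih =>
    rw [ih, sum_range_succ, tailSeries_eq_C_add_X_mul h (c + l)]
    push_cast
    ring_nf

theorem tailSeries_eq_sum_Icc_add {a b : ℤ} (hab : a ≤ b + 1) (c : ℤ) :
    tailSeries h (a + c) = ∑ x ∈ Icc a b, X ^ (x - a).toNat * C (h (x + c)) +
      X ^ (b + 1 - a).toNat * tailSeries h (b + 1 + c) := by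
  obtain ⟨l, hl⟩ := Int.le.dest hab
  obtain rfl : b = a + l - 1 := by lia
  rw [tailSeries_eq_sum_range_add h _ l]
  congr 1
  · refine sum_bij' (fun q _ => a + q) (fun x _ => (x - a).toNat) ?_ ?_ ?_ ?_ ?_
    · simp only [mem_range, mem_Icc]
      lia
    · simp only [mem_range, mem_Icc]
      lia
    · simp
    · simp only [mem_Icc]
      lia
    · simp [add_right_comm]
  · congr 2 <;> lia

end TailSeries

section HorizontalStrips

/-- The sequences `ν` obtained from the partition `μ` by adding a horizontal strip of size `m`
with no box below the last entry of `μ`; pad `μ` by a zero part to allow a new row. The bound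
`μ 0 + m` on the first entry is implied by the other conditions and only serves to make the set
visibly finite, see `mem_horizontalStrips`. -/
noncomputable def horizontalStrips {n : ℕ} (μ : Fin (n + 1) → ℤ) (m : ℕ) :
    Finset (Fin (n + 1) → ℤ) :=
  {ν ∈ Icc μ (Fin.cons (μ 0 + m) (Fin.init μ)) | ∑ i, ν i = ∑ i, μ i + m}

theorem mem_horizontalStrips {n : ℕ} {μ ν : Fin (n + 1) → ℤ} {m : ℕ} :
    ν ∈ horizontalStrips μ m ↔
      (∀ i, μ i ≤ ν i) ∧ (∀ i : Fin n, ν i.succ ≤ μ i.castSucc) ∧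
        ∑ i, ν i = ∑ i, μ i + m := by
  have head_le (hle : ∀ i, μ i ≤ ν i) (hsum : ∑ i, ν i = ∑ i, μ i + m) : ν 0 ≤ μ 0 + m := by
    have head_sub_le := single_le_sum (f := fun i => ν i - μ i)
      (fun i _ => sub_nonneg.2 (hle i)) (mem_univ 0)
    rw [sum_sub_distrib] at head_sub_le
    lia
  simp only [horizontalStrips, mem_filter, mem_Icc, Pi.le_def, Fin.forall_fin_succ (n := n),
    Fin.cons_zero, Fin.cons_succ, Fin.init]
  constructor
  · tauto
  · rintro ⟨hle, hstrip, hsum⟩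
    exact ⟨⟨hle, head_le (Fin.forall_fin_succ.2 hle) hsum, hstrip⟩, hsum⟩

end HorizontalStrips

section Pieri

variable {R : Type*} [CommRing R] (h : ℤ → R)

/-- The Jacobi–Trudi matrix of `μ` with every entry `h c` replaced by `tailSeries h c`;
for a partition `μ` with last part zero its determinant generates the products `h m * s_μ`. -/
noncomputable def tailMatrix {r : ℕ} (μ : Fin r → ℤ) : Matrix (Fin r) (Fin r) R⟦X⟧ :=
  Matrix.of fun i j => tailSeries h (μ i - i + j)

/-- The matrix `tailMatrix h a` with the series in row `i` cut off after degree `b i - a i`. It is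
indexed by the parts `x = a i, …, b i`, so that expanding its rows yields Jacobi–Trudi matrices. -/
noncomputable def truncTailMatrix {r : ℕ} (a b : Fin r → ℤ) : Matrix (Fin r) (Fin r) R⟦X⟧ :=
  Matrix.of fun i j => ∑ x ∈ Icc (a i) (b i), X ^ (x - a i).toNat * C (h (x - i + j))

theorem tailMatrix_apply_eq_truncTailMatrix_add {r : ℕ} {a b : Fin r → ℤ} {i : Fin r}
    (hab : a i ≤ b i + 1) (j : Fin r) :
    tailMatrix h a i j = truncTailMatrix h a b i j +
      X ^ (b i + 1 - a i).toNat * tailSeries h (b i + 1 - i + j) := by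
  simpa only [tailMatrix, truncTailMatrix, Matrix.of_apply, sub_add_eq_add_sub, add_sub]
    using tailSeries_eq_sum_Icc_add h hab (j - i)

theorem det_truncTailMatrix {r : ℕ} (a b : Fin r → ℤ) :
    (truncTailMatrix h a b).det =
      ∑ ν ∈ Icc a b, X ^ (∑ i, (ν i - a i).toNat) * C (schurJT h ν) := by
  rw [truncTailMatrix, det_of_sum_rows]
  refine sum_congr rfl fun ν _ => ?_
  rw [schurJT, RingHom.map_det, ← prod_pow_eq_pow_sum]
  exact Matrix.det_mul_column _ _

theorem coeff_det_truncTailMatrix {n : ℕ} (μ : Fin (n + 1) → ℤ) (m : ℕ) :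
    coeff m (truncTailMatrix h μ (Fin.cons (μ 0 + m) (Fin.init μ))).det =
      ∑ ν ∈ horizontalStrips μ m, schurJT h ν := by
  rw [det_truncTailMatrix, map_sum, horizontalStrips, sum_filter]
  refine sum_congr rfl fun ν hν => ?_
  have size_eq : ((∑ i, (ν i - μ i).toNat : ℕ) : ℤ) = ∑ i, ν i - ∑ i, μ i := by
    rw [Nat.cast_sum, ← sum_sub_distrib]
    exact sum_congr rfl fun i _ => Int.toNat_of_nonneg (sub_nonneg.2 ((mem_Icc.1 hν).1 i))
  rw [coeff_mul_C, coeff_X_pow, ite_mul, one_mul, zero_mul]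
  exact if_congr (by lia) rfl rfl

theorem det_tailMatrix_eq_det_updateRow {n : ℕ} {μ b : Fin (n + 1) → ℤ} (hμ : Antitone μ)
    (hb : ∀ i : Fin n, b i.succ = μ i.castSucc) :
    (tailMatrix h μ).det = ((truncTailMatrix h μ b).updateRow 0 (tailMatrix h μ 0)).det := by
  refine Matrix.det_eq_of_forall_row_eq_smul_add_pred
    (fun i => X ^ (b i.succ + 1 - μ i.succ).toNat) (fun j => ?_) fun i j => ?_
  · rw [Matrix.updateRow_self]
  · have hle : μ i.succ ≤ b i.succ := (hμ i.castSucc_le_succ).trans_eq (hb i).symm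
    have index_eq : b i.succ + 1 - (i.succ : ℕ) + j = μ i.castSucc - i + j := by
      rw [hb, Fin.val_succ]
      push_cast
      ring
    rw [Matrix.updateRow_ne i.succ_ne_zero,
      tailMatrix_apply_eq_truncTailMatrix_add h (hle.trans (lt_add_one _).le), index_eq]
    rfl

theorem X_pow_dvd_det_updateRow_sub_det {n : ℕ} {a b : Fin (n + 1) → ℤ} (hab : a 0 ≤ b 0 + 1) :
    X ^ (b 0 + 1 - a 0).toNat ∣
      ((truncTailMatrix h a b).updateRow 0 (tailMatrix h a 0)).det -
        (truncTailMatrix h a b).det := by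
  refine dvd_det_sub_det fun i j => ?_
  obtain rfl | hi := eq_or_ne i 0
  · rw [Matrix.updateRow_self, tailMatrix_apply_eq_truncTailMatrix_add h hab, add_sub_cancel_left]
    exact dvd_mul_right _ _
  · rw [Matrix.updateRow_ne hi, sub_self]
    exact dvd_zero _

theorem coeff_det_tailMatrix {n : ℕ} {μ : Fin (n + 1) → ℤ} (hμ : Antitone μ) (m : ℕ) :
    coeff m (tailMatrix h μ).det = ∑ ν ∈ horizontalStrips μ m, schurJT h ν := by
  have hdvd := X_pow_dvd_det_updateRow_sub_det h (a := μ) (b := Fin.cons (μ 0 + m) (Fin.init μ))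
    (by rw [Fin.cons_zero]; lia)
  rw [Fin.cons_zero, show (μ 0 + m + 1 - μ 0).toNat = m + 1 by lia] at hdvd
  rw [det_tailMatrix_eq_det_updateRow h hμ (b := Fin.cons (μ 0 + m) (Fin.init μ)) fun _ => rfl,
    ← coeff_det_truncTailMatrix, ← sub_eq_zero, ← map_sub]
  exact X_pow_dvd_iff.1 hdvd m m.lt_succ_self

variable {h}

theorem det_tailMatrix_snoc_zero (hneg : ∀ m : ℤ, m < 0 → h m = 0) {n : ℕ} (μ : Fin n → ℤ) :
    (tailMatrix h (Fin.snoc μ 0 : Fin (n + 1) → ℤ)).det =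
      tailSeries h 0 * C (schurJT h μ) := by
  set μ₀ : Fin (n + 1) → ℤ := Fin.snoc μ 0 with hμ₀
  let B : Matrix (Fin (n + 1)) (Fin (n + 1)) R⟦X⟧ := Matrix.of fun i =>
    Fin.snoc (fun j : Fin n => C (h (μ₀ i - i + j))) (tailSeries h (μ₀ i - i + n))
  have column_reduction : (tailMatrix h μ₀).det = B.det := by
    refine det_eq_of_forall_col_eq_smul_add_succ (fun _ => X) (fun i => ?_) fun i j => ?_
    · simp [B, tailMatrix]
    · simp [B, tailMatrix, tailSeries_eq_C_add_X_mul h (μ₀ i - i + j), add_assoc]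
  rw [column_reduction, det_of_last_row_castSucc_eq_zero]
  · congr 1
    · simp [B, hμ₀]
    · rw [schurJT, RingHom.map_det]
      congr 1
      ext1 i j
      simp [B, hμ₀]
  · intro j
    simp [B, hμ₀, hneg]

theorem schurJT_snoc_zero (h0 : h 0 = 1) (hneg : ∀ m : ℤ, m < 0 → h m = 0) {n : ℕ}
    (μ : Fin n → ℤ) : schurJT h (Fin.snoc μ 0 : Fin (n + 1) → ℤ) = schurJT h μ := by
  rw [schurJT, det_of_last_row_castSucc_eq_zero]
  · simp [h0, schurJT, Matrix.submatrix]
  · intro j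
    simp [hneg]

theorem antitone_snoc {α : Type*} [Preorder α] {n : ℕ} {μ : Fin n → α} {c : α}
    (hμ : Antitone μ) (hc : ∀ i, c ≤ μ i) : Antitone (Fin.snoc μ c : Fin (n + 1) → α) := by
  intro i j hij
  induction j using Fin.lastCases with
  | last => induction i using Fin.lastCases with
    | last => rfl
    | cast i => simpa using hc i
  | cast j => induction i using Fin.lastCases with
    | last => exact absurd hij j.castSucc_lt_last.not_ge
    | cast i => simpa using hμ hij

theorem mul_schurJT_eq_sum_horizontalStrips (hneg : ∀ m : ℤ, m < 0 → h m = 0) {n : ℕ}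
    {μ : Fin n → ℤ} (hμ : Antitone μ) (hμ0 : 0 ≤ μ) (m : ℕ) :
    h m * schurJT h μ = ∑ ν ∈ horizontalStrips (Fin.snoc μ 0) m, schurJT h ν := by
  rw [← coeff_det_tailMatrix h (antitone_snoc (c := 0) hμ hμ0), det_tailMatrix_snoc_zero hneg,
    coeff_mul_C, tailSeries, coeff_mk, zero_add]

end Pieri

section TwosShape

/-- The sequence `(a, b, 2 ^ (i - 1), t)`, the general form of a shape obtained from `(a', 2 ^ i)`
by adding a horizontal strip. For `i = 0` it is `(a, b)`. -/
def twosShape (i : ℕ) (a b t : ℤ) : Fin (i + 2) → ℤ := fun j =>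
  if (j : ℕ) = 0 then a else if (j : ℕ) = 1 then b else if (j : ℕ) = i + 1 then t else 2

theorem twosShape_last {i : ℕ} (hi : 1 ≤ i) (a b t : ℤ) :
    twosShape i a b t (Fin.last (i + 1)) = t := by
  simp [twosShape, Nat.one_le_iff_ne_zero.1 hi]

theorem twosShape_zero_right {i : ℕ} (hi : 1 ≤ i) (a b : ℤ) :
    twosShape i a b 0 = Fin.snoc (fun j : Fin (i + 1) =>
      if (j : ℕ) = 0 then a else if (j : ℕ) = 1 then b else 2) 0 := by
  ext j
  induction j using Fin.lastCases with
  | last => rw [twosShape_last hi, Fin.snoc_last]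
  | cast j => simp [twosShape, j.isLt.ne]

theorem twosShape_two_right (i : ℕ) (a b : ℤ) :
    twosShape i a b 2 = fun j : Fin (i + 2) =>
      if (j : ℕ) = 0 then a else if (j : ℕ) = 1 then b else 2 := by
  funext j
  simp only [twosShape, ite_self]

theorem sum_twosShape {i : ℕ} (hi : 1 ≤ i) (a b t : ℤ) :
    ∑ j, twosShape i a b t j = a + b + t + 2 * (i - 1) := by
  obtain ⟨e, rfl⟩ := Nat.exists_eq_add_of_le' hi
  rw [Fin.sum_univ_succ, Fin.sum_univ_succ, Fin.sum_univ_castSucc]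
  have middle (j : Fin e) : twosShape (e + 1) a b t j.castSucc.succ.succ = 2 := by
    simp [twosShape, j.isLt.ne]
  have head : twosShape (e + 1) a b t 0 = a := rfl
  have second : twosShape (e + 1) a b t (Fin.succ 0) = b := rfl
  rw [head, second, Fin.succ_last, Fin.succ_last, twosShape_last hi,
    sum_congr rfl fun j _ => middle j, sum_const, card_univ, Fintype.card_fin]
  push_cast
  ring

theorem eq_twosShape_of_mem_horizontalStrips {i : ℕ} {a : ℤ} {m : ℕ} {ν : Fin (i + 2) → ℤ}
    (hν : ν ∈ horizontalStrips (twosShape i a 2 0) m) :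
    ν = twosShape i (ν 0) (ν 1) (ν (Fin.last (i + 1))) := by
  obtain ⟨hle, hstrip, -⟩ := mem_horizontalStrips.1 hν
  funext j
  simp only [twosShape]
  split_ifs with head second last
  · exact congrArg ν (Fin.ext head)
  · exact congrArg ν (Fin.ext second)
  · exact congrArg ν (Fin.ext last)
  · obtain ⟨l, rfl⟩ := Fin.exists_succ_eq.2 fun h : j = 0 => head (congrArg Fin.val h)
    have lower := hle l.succ
    have upper := hstrip l
    simp only [twosShape, Fin.val_succ, Fin.val_castSucc] at head second last lower upper
    rw [if_neg head, if_neg second, if_neg last] at lower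
    split_ifs at upper <;> lia

theorem mem_horizontalStrips_twosShape {i : ℕ} (hi : 1 ≤ i) {a : ℤ} {m : ℕ}
    {ν : Fin (i + 2) → ℤ} :
    ν ∈ horizontalStrips (twosShape i a 2 0) m ↔
      ∃ t ∈ Icc (0 : ℤ) 2, ∃ p ∈ Icc (max 0 (m - a + (2 - t))) (m - t),
        twosShape i (a + p) (m - p + (2 - t)) t = ν := by
  simp only [mem_Icc]
  constructor
  · intro hν
    have shape := eq_twosShape_of_mem_horizontalStrips hν
    obtain ⟨hle, hstrip, hsum⟩ := mem_horizontalStrips.1 hν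
    rw [shape, sum_twosShape hi, sum_twosShape hi] at hsum
    have head_ge : a ≤ ν 0 := hle 0
    have second_ge : 2 ≤ ν 1 := hle 1
    have second_le : ν 1 ≤ a := hstrip 0
    have last_ge : 0 ≤ ν (Fin.last (i + 1)) := by
      simpa only [twosShape_last hi] using hle (Fin.last (i + 1))
    have last_le : ν (Fin.last (i + 1)) ≤ 2 := by
      simpa [twosShape, Nat.one_le_iff_ne_zero.1 hi] using hstrip (Fin.last i)
    refine ⟨ν (Fin.last (i + 1)), ⟨last_ge, last_le⟩, ν 0 - a, ⟨by lia, by lia⟩, ?_⟩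
    conv_rhs => rw [shape]
    congr 1 <;> lia
  · rintro ⟨t, ht, p, hp, rfl⟩
    refine mem_horizontalStrips.2 ⟨fun j => ?_, fun j => ?_, ?_⟩
    · simp only [twosShape]
      split_ifs <;> lia
    · simp only [twosShape, Fin.val_succ, Fin.val_castSucc]
      split_ifs <;> lia
    · rw [sum_twosShape hi, sum_twosShape hi]
      ring

theorem sum_horizontalStrips_twosShape {M : Type*} [AddCommMonoid M] {i : ℕ} (hi : 1 ≤ i)
    (a : ℤ) (m : ℕ) (f : (Fin (i + 2) → ℤ) → M) :
    ∑ ν ∈ horizontalStrips (twosShape i a 2 0) m, f ν =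
      ∑ t ∈ Icc (0 : ℤ) 2, ∑ p ∈ Icc (max 0 (m - a + (2 - t))) (m - t),
        f (twosShape i (a + p) (m - p + (2 - t)) t) := by
  rw [sum_sigma']
  refine (sum_bij (fun x _ => twosShape i (a + x.2) (m - x.2 + (2 - x.1)) x.1)
    (fun x hx => ?_) (fun x _ y _ hxy => ?_) (fun ν hν => ?_) fun _ _ => rfl).symm
  · rw [mem_sigma] at hx
    exact (mem_horizontalStrips_twosShape hi).2 ⟨x.1, hx.1, x.2, hx.2, rfl⟩
  · have head_eq := congrFun hxy 0
    have last_eq := congrFun hxy (Fin.last (i + 1))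
    rw [twosShape_last hi, twosShape_last hi] at last_eq
    exact Sigma.ext last_eq (heq_of_eq (add_left_cancel head_eq))
  · obtain ⟨t, ht, p, hp, rfl⟩ := (mem_horizontalStrips_twosShape hi).1 hν
    exact ⟨⟨t, p⟩, mem_sigma.2 ⟨ht, hp⟩, rfl⟩

theorem mul_schurJT_eq_sum_twosShape {R : Type*} [CommRing R] {h : ℤ → R}
    (hneg : ∀ m : ℤ, m < 0 → h m = 0) {i : ℕ} (hi : 1 ≤ i) {a : ℤ} (ha : 2 ≤ a) (m : ℕ) :
    h m * schurJT h (fun j : Fin (i + 1) => if (j : ℕ) = 0 then a else 2) =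
      ∑ t ∈ Icc (0 : ℤ) 2, ∑ p ∈ Icc (max 0 (m - a + (2 - t))) (m - t),
        schurJT h (twosShape i (a + p) (m - p + (2 - t)) t) := by
  set μ : Fin (i + 1) → ℤ := fun j => if (j : ℕ) = 0 then a else 2 with hμ
  have anti : Antitone μ := by
    intro j l hjl
    have : (j : ℕ) ≤ l := hjl
    simp only [hμ]
    split_ifs <;> lia
  have nonneg : 0 ≤ μ := by
    intro j
    simp only [hμ, Pi.zero_apply]
    split_ifs <;> lia
  have snoc_eq : Fin.snoc μ 0 = twosShape i a 2 0 := by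
    simp only [twosShape_zero_right hi, hμ, ite_self]
  rw [mul_schurJT_eq_sum_horizontalStrips hneg anti nonneg, snoc_eq,
    sum_horizontalStrips_twosShape hi]

end TwosShape

/-- **Pieri rule for `h_{n-k} · s_{(k-2i, 2^i)}`.**  For `2 ≤ k ≤ n` and
`1 ≤ i ≤ ⌊k/2⌋ - 1`,
`h_{n-k} s_{(k-2i,2^i)} = ∑_{p=max(0,n-2k+2i+2)}^{n-k} s_{(k+p-2i, n-k-p+2, 2^{i-1})}
 + ∑_{p=max(0,n-2k+2i+1)}^{n-k-1} s_{(k+p-2i, n-k-p+1, 2^{i-1}, 1)}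
 + ∑_{p=max(0,n-2k+2i)}^{n-k-2} s_{(k+p-2i, n-k-p, 2^i)}`,
where Schur functions are given by the Jacobi–Trudi determinant. -/
theorem pieri_h_s {R : Type*} [CommRing R] (h : ℤ → R)
    (h0 : h 0 = 1) (hneg : ∀ m : ℤ, m < 0 → h m = 0)
    (n k i : ℕ) (hk2 : 2 ≤ k) (hkn : k ≤ n) (hi1 : 1 ≤ i) (hik : i ≤ k / 2 - 1) :
    h ((n : ℤ) - k) *
        schurJT h (fun j : Fin (i + 1) => if (j : ℕ) = 0 then (k : ℤ) - 2 * i else 2) =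
      (∑ p ∈ Finset.Icc (max 0 ((n : ℤ) - 2 * k + 2 * i + 2)) ((n : ℤ) - k),
        schurJT h (fun j : Fin (i + 1) =>
          if (j : ℕ) = 0 then (k : ℤ) + p - 2 * i
          else if (j : ℕ) = 1 then (n : ℤ) - k - p + 2 else 2)) +
      (∑ p ∈ Finset.Icc (max 0 ((n : ℤ) - 2 * k + 2 * i + 1)) ((n : ℤ) - k - 1),
        schurJT h (fun j : Fin (i + 2) =>
          if (j : ℕ) = 0 then (k : ℤ) + p - 2 * i
          else if (j : ℕ) = 1 then (n : ℤ) - k - p + 1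
          else if (j : ℕ) = i + 1 then 1 else 2)) +
      (∑ p ∈ Finset.Icc (max 0 ((n : ℤ) - 2 * k + 2 * i)) ((n : ℤ) - k - 2),
        schurJT h (fun j : Fin (i + 2) =>
          if (j : ℕ) = 0 then (k : ℤ) + p - 2 * i
          else if (j : ℕ) = 1 then (n : ℤ) - k - p else 2)) := by
  obtain ⟨m, rfl⟩ := Nat.exists_eq_add_of_le hkn
  have lower_bound : ((k + m : ℕ) : ℤ) - 2 * k + 2 * i = m - (k - 2 * i) := by
    push_cast
    ring
  have size : ((k + m : ℕ) : ℤ) - k = m := by simp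
  have range_eq : Icc (0 : ℤ) 2 = {0, 1, 2} := rfl
  rw [lower_bound, size, mul_schurJT_eq_sum_twosShape hneg hi1 (by lia), range_eq,
    sum_insert (by simp), sum_insert (by simp), sum_singleton, ← add_assoc]
  simp only [twosShape_zero_right hi1, schurJT_snoc_zero h0 hneg, twosShape_two_right,
    sub_add_eq_add_sub, sub_zero, sub_self, add_zero, show (2 : ℤ) - 1 = 1 from rfl]
  rfl
end

section
/- For a partition λ = (λ_1, λ_2, 2^j) of n with λ_1 ≥ λ_2 ≥ 2 and j ≥ 1, the coefficient of s_λ in B_n(x;t) = Σ_{k=2}^{n} h_{n-k} Σ_{i=0}^{⌊k/2⌋-1} s_{(k-2i,2^i)} t^{i+1} equals (λ_1 - λ_2 + 1)(t^{j+2} + t^{j+1}) = (λ_1 - λ_2 + 1) t^{ℓ(λ)-1}(t+1). -/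
/-- The ring of symmetric functions `Λ = ℤ[h₁, h₂, …]`. -/
noncomputable def hh (m : ℤ) : MvPolynomial ℕ ℤ :=
  if m < 0 then 0 else if m = 0 then 1 else MvPolynomial.X m.toNat

/-- `B_n(x;t) = ∑_{k=2}^n h_{n-k} ∑_{i=0}^{⌊k/2⌋-1} s_{(k-2i,2^i)} t^{i+1}`. -/
noncomputable def Bpoly (n : ℕ) : Polynomial (MvPolynomial ℕ ℤ) :=
  ∑ k ∈ Finset.Icc 2 n, Polynomial.C (hh ((n : ℤ) - k)) *
    ∑ i ∈ Finset.range (k / 2),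
      Polynomial.C (schurJT hh fun j : Fin (i + 1) =>
        if (j : ℕ) = 0 then (k : ℤ) - 2 * i else 2) * Polynomial.X ^ (i + 1)

/-- The Schur function of a partition of `n` (its parts sorted decreasingly). -/
noncomputable def schurOfPartition {n : ℕ} (μ : Nat.Partition n) : MvPolynomial ℕ ℤ :=
  schurJT hh fun i : Fin (μ.parts.sort (· ≥ ·)).length =>
    (((μ.parts.sort (· ≥ ·)).get i : ℕ) : ℤ)

/-!
A Schur coefficient can be read off in `N` variables: by the bialternant formula `s_μ a_δ = a_{μ+δ}`
(Jacobi–Trudi), the coefficient of `s_λ` in `F` is the coefficient of `x ^ (λ + δ)` in `F a_δ`.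
Expanding the alternant, the coefficient of `s_λ` in `h_m s_μ` becomes the determinant of the matrix
`[μ_j + δ_j ≤ λ_i + δ_i]`. Its rows are indicators of nested final segments, so it is `1` if
`λ / μ` is a horizontal strip and `0` otherwise, which is Pieri's rule. For
`λ = (λ₁, λ₂, 2^j)` and `μ = (a, 2^i)` the strip condition says `λ₂ ≤ a ≤ λ₁` and `i ∈ {j, j + 1}`,
so exactly two powers of `t` survive, each with `λ₁ - λ₂ + 1` choices of `a = k - 2i`.
-/

section Specialization

open PowerSeries in
/-- The generating series `∏ₗ 1 / (1 - xₗ T) = ∑ₘ h_m(x) Tᵐ` of the complete homogeneous symmetric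
polynomials in a finite alphabet `x`. -/
noncomputable def completeSeries {R σ : Type*} [CommRing R] [Fintype σ] (x : σ → R) : R⟦X⟧ :=
  ∏ l, mk (x l ^ ·)

/-- The polynomial `∏_{l ≠ k} (1 - xₗ T)`, whose coefficients are, up to sign, the elementary
symmetric polynomials in the alphabet `x` with `x_k` omitted. -/
noncomputable def omittedProduct {R σ : Type*} [CommRing R] [Fintype σ] [DecidableEq σ]
    (x : σ → R) (k : σ) : Polynomial R :=
  ∏ l ∈ Finset.univ.erase k, (1 - Polynomial.C (x l) * Polynomial.X)

/-- The evaluation `h_m ↦ h_m(x)` of abstract symmetric functions at a finite alphabet `x`. -/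
noncomputable def evalAlphabet {R σ : Type*} [CommRing R] [Fintype σ] (x : σ → R) :
    MvPolynomial ℕ ℤ →ₐ[ℤ] R :=
  MvPolynomial.aeval fun m => PowerSeries.coeff m (completeSeries x)

variable {R σ : Type*} [CommRing R] [Fintype σ]

lemma hh_of_neg {m : ℤ} (hm : m < 0) : hh m = 0 := if_pos hm

lemma hh_zero : hh 0 = 1 := by simp [hh]

lemma evalAlphabet_hh (x : σ → R) (m : ℕ) :
    evalAlphabet x (hh m) = PowerSeries.coeff m (completeSeries x) := by
  rcases m.eq_zero_or_pos with rfl | hm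
  · simp [hh_zero, completeSeries, map_prod]
  · rw [hh, if_neg (by omega), if_neg (by omega), evalAlphabet, MvPolynomial.aeval_X,
      Int.toNat_natCast]

lemma geometricSeries_mul (a : R) :
    PowerSeries.mk (a ^ ·) * (1 - PowerSeries.C a * PowerSeries.X) = 1 := by
  simpa [PowerSeries.rescale_mk, PowerSeries.rescale_X] using
    congrArg (PowerSeries.rescale a) (PowerSeries.mk_one_mul_one_sub_eq_one R)

variable [DecidableEq σ]

lemma coe_omittedProduct (x : σ → R) (k : σ) :
    (omittedProduct x k : PowerSeries R) =
      ∏ l ∈ Finset.univ.erase k, (1 - PowerSeries.C (x l) * PowerSeries.X) := by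
  rw [omittedProduct, ← Polynomial.coeToPowerSeries.ringHom_apply, map_prod]
  simp

lemma completeSeries_mul_omittedProduct (x : σ → R) (k : σ) :
    completeSeries x * (omittedProduct x k : PowerSeries R) = PowerSeries.mk (x k ^ ·) := by
  rw [coe_omittedProduct, completeSeries, ← Finset.mul_prod_erase _ _ (Finset.mem_univ k),
    mul_assoc, ← Finset.prod_mul_distrib,
    Finset.prod_congr rfl fun l _ => geometricSeries_mul (x l), Finset.prod_const_one, mul_one]

lemma coeff_omittedProduct_of_card_le (x : σ → R) (k : σ) {q : ℕ} (hq : Fintype.card σ ≤ q) :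
    (omittedProduct x k).coeff q = 0 := by
  apply Polynomial.coeff_eq_zero_of_natDegree_lt
  calc (omittedProduct x k).natDegree
      ≤ ∑ l ∈ Finset.univ.erase k, (1 - Polynomial.C (x l) * Polynomial.X).natDegree := by
        exact Polynomial.natDegree_prod_le _ _
    _ ≤ (Finset.univ.erase k).card • 1 :=
        Finset.sum_le_card_nsmul _ _ 1 fun l _ => by compute_degree
    _ = (Finset.univ.erase k).card := by rw [smul_eq_mul, mul_one]
    _ < Fintype.card σ := Finset.card_erase_lt_of_mem (Finset.mem_univ k)
    _ ≤ q := hq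

lemma sum_evalAlphabet_hh_mul_coeff_omittedProduct (x : σ → R) (k : σ) (a : ℕ) :
    ∑ q ∈ Finset.range (Fintype.card σ),
      evalAlphabet x (hh ((a : ℤ) - q)) * (omittedProduct x k).coeff q = x k ^ a := by
  have hcoeff := congrArg (PowerSeries.coeff a) (completeSeries_mul_omittedProduct x k)
  rw [mul_comm, PowerSeries.coeff_mul, PowerSeries.coeff_mk,
    Finset.Nat.sum_antidiagonal_eq_sum_range_succ_mk] at hcoeff
  rw [← hcoeff]
  refine Finset.sum_congr_of_eq_on_inter (fun q _ hq => ?_) (fun q _ hq => ?_) fun q _ hq => ?_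
  · rw [hh_of_neg (by simp only [Finset.mem_range] at hq; omega), map_zero, zero_mul]
  · rw [Polynomial.coeff_coe, coeff_omittedProduct_of_card_le x k (by simpa using hq), zero_mul]
  · rw [← Nat.cast_sub (Finset.mem_range_succ_iff.mp hq), evalAlphabet_hh, Polynomial.coeff_coe,
      mul_comm]

end Specialization

section JacobiTrudi

variable {R : Type*} [CommRing R] {N : ℕ}

/-- The alternant `det (x_k ^ a_i)`. For `a = δ = (N - 1, …, 1, 0)`, encoded as
`fun i => (i.rev : ℕ)`, it is the Vandermonde determinant. -/
def alternant (x : Fin N → R) (a : Fin N → ℕ) : R :=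
  Matrix.det (Matrix.of fun i k => x k ^ a i)

lemma schurJT_succ_of_last_eq_zero {h : ℤ → R} (h_zero : h 0 = 1) (h_neg : ∀ m < 0, h m = 0)
    (f : ℕ → ℕ) {r : ℕ} (hf : f r = 0) :
    schurJT h (fun i : Fin (r + 1) => (f i : ℤ)) = schurJT h fun i : Fin r => (f i : ℤ) := by
  rw [schurJT, Matrix.det_succ_row _ (Fin.last r), Finset.sum_eq_single (Fin.last r)]
  · simp [hf, h_zero, ← two_mul, schurJT, Matrix.submatrix]
  · intro j _ hj
    have : (j : ℕ) < r := Fin.val_lt_last hj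
    rw [Matrix.of_apply, h_neg _ (by simp [hf]; omega), mul_zero, zero_mul]
  · simp

lemma schurJT_eq_of_le {h : ℤ → R} (h_zero : h 0 = 1) (h_neg : ∀ m < 0, h m = 0) (f : ℕ → ℕ)
    {r : ℕ} (hrN : r ≤ N) (hf : ∀ p, r ≤ p → f p = 0) :
    schurJT h (fun i : Fin N => (f i : ℤ)) = schurJT h fun i : Fin r => (f i : ℤ) := by
  induction N, hrN using Nat.le_induction with
  | base => rfl
  | succ N hN ih => rw [schurJT_succ_of_last_eq_zero h_zero h_neg f (hf N hN), ih]

lemma schurJT_zero {h : ℤ → R} (h_zero : h 0 = 1) (h_neg : ∀ m < 0, h m = 0) :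
    schurJT h (fun _ : Fin N => 0) = 1 :=
  (schurJT_eq_of_le h_zero h_neg (fun _ => 0) N.zero_le fun _ _ => rfl).trans Matrix.det_fin_zero

lemma evalAlphabet_schurJT_mul_det (x : Fin N → R) (f : Fin N → ℕ) :
    evalAlphabet x (schurJT hh fun i => (f i : ℤ)) *
      Matrix.det (Matrix.of fun j k : Fin N => (omittedProduct x k).coeff j.rev) =
      alternant x fun i => f i + i.rev := by
  rw [schurJT, AlgHom.map_det, ← Matrix.det_mul, alternant]
  congr 1
  ext i k
  simp only [Matrix.mul_apply, AlgHom.mapMatrix_apply, Matrix.map_apply, Matrix.of_apply]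
  rw [← sum_evalAlphabet_hh_mul_coeff_omittedProduct, Fintype.card_fin, Finset.sum_range,
    ← Equiv.sum_comp Fin.revPerm]
  refine Finset.sum_congr rfl fun j _ => ?_
  simp only [Fin.revPerm_apply, Fin.rev_rev, Fin.val_rev]
  congr 3
  omega

theorem evalAlphabet_schurJT_mul_alternant (x : Fin N → R) (f : Fin N → ℕ) :
    evalAlphabet x (schurJT hh fun i => (f i : ℤ)) * alternant x (fun i => i.rev) =
      alternant x fun i => f i + i.rev := by
  have hdet := evalAlphabet_schurJT_mul_det x fun _ => 0
  simp only [Nat.cast_zero, schurJT_zero hh_zero fun _ => hh_of_neg, map_one, one_mul,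
    zero_add] at hdet
  rw [← hdet, evalAlphabet_schurJT_mul_det]

end JacobiTrudi

section Pieri

variable {R : Type*} [CommRing R] {N : ℕ}

lemma card_filter_not_le_iff_of_monotone {p : Fin N → Prop} [DecidablePred p]
    (hp : Monotone p) (j : Fin N) : Finset.card {k | ¬ p k} ≤ j ↔ p j := by
  constructor
  · intro hcard
    by_contra hj
    have hsub : Finset.Iic j ⊆ ({k | ¬ p k} : Finset (Fin N)) := fun k hk =>
      Finset.mem_filter_univ k |>.mpr fun hk' => hj (hp (Finset.mem_Iic.mp hk) hk')
    have := Finset.card_le_card hsub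
    rw [Fin.card_Iic] at this
    omega
  · intro hj
    rw [← Fin.card_Iio]
    refine Finset.card_le_card fun k hk => Finset.mem_Iio.mpr ?_
    by_contra! hjk
    exact (Finset.mem_filter_univ k |>.mp hk) (hp hjk hj)

lemma det_staircase_indicator {d : Fin N → ℕ} (hd : Monotone d) :
    Matrix.det (Matrix.of fun i j : Fin N => if d i ≤ j then (1 : R) else 0) =
      if ∀ i, d i = i then 1 else 0 := by
  split_ifs with h
  · rw [Matrix.det_of_isUpperTriangular]
    · simp [h]
    · intro i j hij
      have : j < i := hij
      simp [h, this]
  · by_cases hlt : ∀ i, d i < N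
    · let d' : Fin N → Fin N := fun i => ⟨d i, hlt i⟩
      have hd' : Monotone d' := fun _ _ hij => hd hij
      have hninj : ¬ Function.Injective d' := fun hinj =>
        h fun i => congrArg Fin.val (congrFun (hd'.strictMono_of_injective hinj).eq_id i)
      obtain ⟨i, i', heq, hne⟩ := Function.not_injective_iff.mp hninj
      have heq : d i = d i' := congrArg Fin.val heq
      exact Matrix.det_zero_of_row_eq hne (by ext j; simp [heq])
    · push Not at hlt
      obtain ⟨i, hi⟩ := hlt
      exact Matrix.det_eq_zero_of_row_eq_zero i fun j => if_neg (by omega)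

lemma det_indicator_le_of_antitone {α : Type*} [Preorder α] [DecidableLE α] {L M : Fin N → α}
    (hL : Antitone L) (hM : Antitone M) :
    Matrix.det (Matrix.of fun i j : Fin N => if M j ≤ L i then (1 : R) else 0) =
      if ∀ i j, M j ≤ L i ↔ i ≤ j then 1 else 0 := by
  set d : Fin N → ℕ := fun i => Finset.card {k | ¬ M k ≤ L i}
  have hle (i j : Fin N) : d i ≤ j ↔ M j ≤ L i :=
    card_filter_not_le_iff_of_monotone (fun _ _ hjj' hj => (hM hjj').trans hj) j
  have hmono : Monotone d := fun i i' hii' =>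
    Finset.card_le_card fun k hk => by
      simp only [Finset.mem_filter_univ] at hk ⊢
      exact fun hk' => hk (hk'.trans (hL hii'))
  simp only [← hle, det_staircase_indicator hmono]
  refine if_congr ⟨fun h i j => by rw [h, Fin.val_fin_le], fun h i => le_antisymm ?_ ?_⟩ rfl rfl
  · exact (h i i).mpr le_rfl
  · by_contra! hlt
    exact hlt.not_ge ((h i ⟨d i, by omega⟩).mp le_rfl)

lemma prod_univ_X_pow {σ : Type*} [Fintype σ] (a : σ → ℕ) :
    ∏ i, (MvPolynomial.X i : MvPolynomial σ R) ^ a i =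
      MvPolynomial.monomial (Finsupp.equivFunOnFinite.symm a) 1 := by
  rw [MvPolynomial.monomial_eq, Finsupp.prod_fintype _ _ (by simp), map_one, one_mul]
  simp only [Finsupp.equivFunOnFinite_symm_apply_apply]

lemma coeff_coeff_completeSeries_X {σ : Type*} [Fintype σ] (m : ℕ) (s : σ →₀ ℕ) :
    (PowerSeries.coeff m (completeSeries (MvPolynomial.X : σ → MvPolynomial σ R))).coeff s =
      if ∑ i, s i = m then 1 else 0 := by
  classical
  simp [completeSeries, PowerSeries.coeff_prod, prod_univ_X_pow, MvPolynomial.coeff_sum,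
    MvPolynomial.coeff_monomial]

lemma coeff_prod_X_pow_mul_completeSeries {σ : Type*} [Fintype σ] {a L : σ → ℕ} {m : ℕ}
    (hsum : ∑ i, L i = ∑ i, a i + m) :
    ((∏ i, (MvPolynomial.X i : MvPolynomial σ R) ^ a i) *
      PowerSeries.coeff m (completeSeries MvPolynomial.X)).coeff
      (Finsupp.equivFunOnFinite.symm L) = if ∀ i, a i ≤ L i then 1 else 0 := by
  classical
  rw [prod_univ_X_pow, MvPolynomial.coeff_monomial_mul', one_mul,
    coeff_coeff_completeSeries_X]
  refine if_ctx_congr Iff.rfl (fun hle => if_pos ?_) fun _ => rfl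
  have hdeg : ∑ i, (L i - a i) = m := by
    rw [Finset.sum_tsub_distrib _ fun i _ => hle i, hsum, Nat.add_sub_cancel_left]
  simpa using hdeg

lemma coeff_alternant_mul_completeSeries {L M : Fin N → ℕ} {m : ℕ}
    (hsum : ∑ i, L i = ∑ i, M i + m) :
    (alternant MvPolynomial.X M * PowerSeries.coeff m (completeSeries MvPolynomial.X)).coeff
      (Finsupp.equivFunOnFinite.symm L) =
      Matrix.det (Matrix.of fun i j : Fin N => if M j ≤ L i then (1 : R) else 0) := by
  rw [alternant, ← Matrix.det_transpose (Matrix.of fun i j : Fin N => if M j ≤ L i then _ else _),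
    Matrix.det_apply, Matrix.det_apply, Finset.sum_mul, MvPolynomial.coeff_sum]
  refine Finset.sum_congr rfl fun σ _ => ?_
  have hsumσ : ∑ i, L i = ∑ i, M (σ i) + m := by rw [Equiv.sum_comp σ M, hsum]
  simp only [Matrix.transpose_apply, Matrix.of_apply, Finset.prod_ite_zero, Finset.prod_const_one,
    Finset.mem_univ, true_implies, smul_mul_assoc, Units.smul_def, MvPolynomial.coeff_smul,
    coeff_prod_X_pow_mul_completeSeries hsumσ]
  congr

/-- The skew shape `f / g` is a horizontal strip; `f` and `g` are sequences of row lengths,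
extended by zeros. -/
def IsHorizontalStrip (f g : ℕ → ℕ) : Prop :=
  ∀ p, g p ≤ f p ∧ f (p + 1) ≤ g p

lemma strictAnti_add_rev {f : ℕ → ℕ} (hf : Antitone f) :
    StrictAnti fun i : Fin N => f i + (i.rev : ℕ) :=
  fun _ _ hij => add_lt_add_of_le_of_lt (hf (Fin.le_def.mp hij.le)) (Fin.rev_lt_rev.mpr hij)

lemma interlace_add_rev_iff_isHorizontalStrip {f g : ℕ → ℕ} (hf : Antitone f) (hg : Antitone g)
    (hfN : f N = 0) (hgN : g N = 0) :
    (∀ i j : Fin N, g j + j.rev ≤ f i + i.rev ↔ i ≤ j) ↔ IsHorizontalStrip f g := by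
  constructor
  · intro h p
    rcases lt_or_ge p N with hp | hp
    · have hle := (h ⟨p, hp⟩ ⟨p, hp⟩).mpr le_rfl
      refine ⟨by simpa using hle, ?_⟩
      rcases (Nat.succ_le_of_lt hp).lt_or_eq with hp' | hp'
      · have hlt := mt (h ⟨p + 1, hp'⟩ ⟨p, hp⟩).mp (by simp)
        simp only [Fin.val_rev] at hlt
        omega
      · simp [← Nat.succ_eq_add_one, hp', hfN]
    · have := hf hp
      have := hf (Nat.le_add_right p 1)
      have := hg hp
      omega
  · intro h i j
    refine ⟨fun hle => ?_, fun hij => ?_⟩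
    · by_contra! hji
      have hlt : f i + i.rev < g j + j.rev :=
        add_lt_add_of_le_of_lt ((hf (Nat.succ_le_of_lt hji)).trans (h j).2)
          (Fin.rev_lt_rev.mpr hji)
      exact hlt.not_ge hle
    · exact ((strictAnti_add_rev hg).antitone hij).trans (Nat.add_le_add_right (h i).1 _)

/-- The coefficient of `s_f` in a symmetric function, for a partition with row lengths `f` and at
most `N` parts: by the bialternant formula it is the coefficient of `x ^ (f + δ)` in the product of
the symmetric function, evaluated in `N` variables, with the Vandermonde determinant. -/
noncomputable def schurCoeff (N : ℕ) (f : ℕ → ℕ) : MvPolynomial ℕ ℤ →ₗ[ℤ] ℤ :=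
  MvPolynomial.lcoeff ℤ (Finsupp.equivFunOnFinite.symm fun i : Fin N => f i + (i.rev : ℕ)) ∘ₗ
    LinearMap.mulRight ℤ (alternant MvPolynomial.X fun i : Fin N => (i.rev : ℕ)) ∘ₗ
    (evalAlphabet (MvPolynomial.X : Fin N → MvPolynomial (Fin N) ℤ)).toLinearMap

open Classical in
theorem schurCoeff_hh_mul_schurJT {f g : ℕ → ℕ} (hf : Antitone f) (hg : Antitone g)
    (hfN : f N = 0) (hgN : g N = 0) {m : ℕ}
    (hsum : ∑ p ∈ Finset.range N, f p = ∑ p ∈ Finset.range N, g p + m) :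
    schurCoeff N f (hh m * schurJT hh fun i : Fin N => (g i : ℤ)) =
      if IsHorizontalStrip f g then 1 else 0 := by
  have hsum' : ∑ i : Fin N, (f i + (i.rev : ℕ)) = ∑ i : Fin N, (g i + (i.rev : ℕ)) + m := by
    simp only [Finset.sum_add_distrib, Fin.sum_univ_eq_sum_range (fun p => f p),
      Fin.sum_univ_eq_sum_range (fun p => g p), hsum, add_right_comm]
  simp only [schurCoeff, LinearMap.comp_apply, AlgHom.toLinearMap_apply, map_mul,
    LinearMap.mulRight_apply, MvPolynomial.lcoeff_apply]
  rw [mul_assoc, evalAlphabet_schurJT_mul_alternant _ fun i : Fin N => g i, evalAlphabet_hh,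
    mul_comm, coeff_alternant_mul_completeSeries hsum',
    det_indicator_le_of_antitone (strictAnti_add_rev hf).antitone (strictAnti_add_rev hg).antitone]
  exact if_congr (interlace_add_rev_iff_isHorizontalStrip hf hg hfN hgN) rfl rfl

end Pieri

section Partitions

/-- The row lengths of the Young diagram of a list of parts, indexed from `0` and extended by
zeros. -/
def rows (l : List ℕ) (p : ℕ) : ℕ := l.getD p 0

lemma rows_cons_zero (a : ℕ) (l : List ℕ) : rows (a :: l) 0 = a := List.getD_cons_zero

lemma rows_cons_succ (a : ℕ) (l : List ℕ) (p : ℕ) : rows (a :: l) (p + 1) = rows l p :=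
  List.getD_cons_succ

lemma rows_of_length_le {l : List ℕ} {p : ℕ} (hp : l.length ≤ p) : rows l p = 0 :=
  List.getD_eq_default l 0 hp

lemma rows_replicate (r a p : ℕ) : rows (List.replicate r a) p = if p < r then a else 0 := by
  split_ifs with h
  · exact List.getD_replicate _ h
  · exact rows_of_length_le (by simpa using h)

lemma sum_rows {l : List ℕ} {N : ℕ} (hN : l.length ≤ N) :
    ∑ p ∈ Finset.range N, rows l p = l.sum := by
  rw [← Finset.sum_subset (Finset.range_subset_range.mpr hN) fun p _ hp =>
    rows_of_length_le (by simpa using hp), Finset.sum_range]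
  simp [rows]

lemma antitone_rows {l : List ℕ} (hl : l.Pairwise (· ≥ ·)) : Antitone (rows l) := by
  refine antitone_nat_of_succ_le fun p => ?_
  by_cases hp : p + 1 < l.length
  · simpa [rows, hp, Nat.lt_of_succ_lt hp] using
      List.pairwise_iff_getElem.mp hl p (p + 1) (Nat.lt_of_succ_lt hp) hp p.lt_succ_self
  · rw [rows_of_length_le (not_lt.mp hp)]
    exact Nat.zero_le _

lemma eq_of_rows_eq {l l' : List ℕ} (hl : 0 ∉ l) (hl' : 0 ∉ l') (h : rows l = rows l') :
    l = l' := by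
  refine List.ext_getElem? fun p => ?_
  have hp := congrFun h p
  simp only [rows, List.getD_eq_getElem?_getD] at hp
  cases ha : l[p]? <;> cases hb : l'[p]? <;>
    simp only [ha, hb, Option.getD_none, Option.getD_some] at hp
  case none.none => rfl
  case none.some => exact absurd (hp ▸ List.mem_of_getElem? hb) hl'
  case some.none => exact absurd (hp ▸ List.mem_of_getElem? ha) hl
  case some.some => rw [hp]

variable {n : ℕ}

/-- The row lengths `μ₁ ≥ μ₂ ≥ …` of a partition, indexed from `0` and extended by zeros. -/
def rowLen (μ : Nat.Partition n) : ℕ → ℕ := rows (μ.parts.sort (· ≥ ·))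

lemma antitone_rowLen (μ : Nat.Partition n) : Antitone (rowLen μ) :=
  antitone_rows (Multiset.pairwise_sort _ _)

lemma length_sort_parts_le (μ : Nat.Partition n) : (μ.parts.sort (· ≥ ·)).length ≤ n := by
  simpa [μ.parts_sum] using
    Multiset.card_nsmul_le_sum (s := μ.parts) (a := 1) fun _ ha => μ.parts_pos ha

lemma rowLen_of_le (μ : Nat.Partition n) {p : ℕ} (hp : n ≤ p) : rowLen μ p = 0 :=
  rows_of_length_le ((length_sort_parts_le μ).trans hp)

lemma sum_rowLen (μ : Nat.Partition n) : ∑ p ∈ Finset.range n, rowLen μ p = n := by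
  rw [rowLen, sum_rows (length_sort_parts_le μ), ← Multiset.sum_coe, Multiset.sort_eq, μ.parts_sum]

lemma rowLen_injective : Function.Injective (rowLen (n := n)) := by
  intro μ ν h
  have hpos (μ : Nat.Partition n) : 0 ∉ μ.parts.sort (· ≥ ·) := fun h0 =>
    (μ.parts_pos ((Multiset.mem_sort _).mp h0)).false
  ext1
  rw [← Multiset.sort_eq μ.parts (· ≥ ·), eq_of_rows_eq (hpos μ) (hpos ν) h, Multiset.sort_eq]

lemma schurOfPartition_eq (μ : Nat.Partition n) :
    schurOfPartition μ = schurJT hh fun i : Fin n => (rowLen μ i : ℤ) := by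
  rw [schurJT_eq_of_le hh_zero (fun _ => hh_of_neg) (rowLen μ) (length_sort_parts_le μ) fun _ =>
    rows_of_length_le, schurOfPartition]
  congr 1
  ext i
  simp only [rowLen, rows, List.getD_eq_get]

lemma isHorizontalStrip_rowLen_iff (lam μ : Nat.Partition n) :
    IsHorizontalStrip (rowLen lam) (rowLen μ) ↔ μ = lam := by
  refine ⟨fun h => rowLen_injective (funext fun p => ?_), ?_⟩
  · rcases lt_or_ge p n with hp | hp
    · refine (Finset.sum_eq_sum_iff_of_le fun p _ => (h p).1).mp ?_ p (Finset.mem_range.mpr hp)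
      rw [sum_rowLen, sum_rowLen]
    · rw [rowLen_of_le μ hp, rowLen_of_le lam hp]
  · rintro rfl p
    exact ⟨le_rfl, antitone_rowLen μ p.le_succ⟩

lemma schurCoeff_schurOfPartition (lam μ : Nat.Partition n) :
    schurCoeff n (rowLen lam) (schurOfPartition μ) = if μ = lam then 1 else 0 := by
  classical
  have hpieri := schurCoeff_hh_mul_schurJT (m := 0) (antitone_rowLen lam) (antitone_rowLen μ)
    (rowLen_of_le lam le_rfl) (rowLen_of_le μ le_rfl) (by rw [sum_rowLen, sum_rowLen, add_zero])
  rw [Nat.cast_zero, hh_zero, one_mul, ← schurOfPartition_eq] at hpieri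
  rw [hpieri]
  exact if_congr (isHorizontalStrip_rowLen_iff lam μ) rfl rfl

lemma coeff_eq_schurCoeff_coeff {P : Polynomial (MvPolynomial ℕ ℤ)}
    {c : Nat.Partition n → Polynomial ℤ}
    (hP : P = ∑ μ, (c μ).map (Int.castRingHom (MvPolynomial ℕ ℤ)) *
      Polynomial.C (schurOfPartition μ)) (lam : Nat.Partition n) (d : ℕ) :
    (c lam).coeff d = schurCoeff n (rowLen lam) (P.coeff d) := by
  simp [hP, Polynomial.finsetSum_coeff, ← zsmul_eq_mul, schurCoeff_schurOfPartition]

end Partitions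

section Coefficients

lemma coeff_Bpoly_zero (n : ℕ) : (Bpoly n).coeff 0 = 0 := by
  simp [Bpoly, Polynomial.finsetSum_coeff]

lemma schurJT_rows_cons_replicate_two {N a i : ℕ} (hN : i + 1 ≤ N) :
    schurJT hh (fun p : Fin N => (rows (a :: List.replicate i 2) p : ℤ)) =
      schurJT hh fun p : Fin (i + 1) => if (p : ℕ) = 0 then (a : ℤ) else 2 := by
  rw [schurJT_eq_of_le hh_zero (fun _ => hh_of_neg) (rows (a :: List.replicate i 2)) hN fun p hp =>
    rows_of_length_le (by simpa using hp)]
  congr 1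
  ext p
  cases p using Fin.cases with
  | zero => simp [rows]
  | succ p => simp [rows]

lemma coeff_Bpoly_succ (n i : ℕ) :
    (Bpoly n).coeff (i + 1) = ∑ k ∈ Finset.Icc (2 * i + 2) n,
      hh ((n - k : ℕ) : ℤ) *
        schurJT hh fun p : Fin n => (rows ((k - 2 * i) :: List.replicate i 2) p : ℤ) := by
  have hIcc : Finset.Icc (2 * i + 2) n = {k ∈ Finset.Icc 2 n | i < k / 2} := by
    ext k
    simp only [Finset.mem_filter, Finset.mem_Icc]
    omega
  rw [hIcc, Finset.sum_filter, Bpoly, Polynomial.finsetSum_coeff]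
  refine Finset.sum_congr rfl fun k hk => ?_
  simp only [Polynomial.coeff_C_mul, Polynomial.finsetSum_coeff, Polynomial.coeff_X_pow,
    add_left_inj, mul_ite, mul_one, mul_zero, Finset.sum_ite_eq, Finset.mem_range]
  refine if_ctx_congr Iff.rfl (fun hik => ?_) fun _ => rfl
  rw [Finset.mem_Icc] at hk
  rw [schurJT_rows_cons_replicate_two (by omega), Nat.cast_sub hk.2, Nat.cast_sub (by omega)]
  push_cast
  rfl

open Classical in
theorem schurCoeff_coeff_Bpoly_succ {n : ℕ} {f : ℕ → ℕ} (hf : Antitone f) (hfn : f n = 0)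
    (hsum : ∑ p ∈ Finset.range n, f p = n) (i : ℕ) :
    schurCoeff n f ((Bpoly n).coeff (i + 1)) =
      Finset.card {k ∈ Finset.Icc (2 * i + 2) n |
        IsHorizontalStrip f (rows ((k - 2 * i) :: List.replicate i 2))} := by
  rw [coeff_Bpoly_succ, map_sum, ← Finset.sum_boole]
  refine Finset.sum_congr rfl fun k hk => ?_
  rw [Finset.mem_Icc] at hk
  have hlen : ((k - 2 * i) :: List.replicate i 2).length ≤ n := by
    rw [List.length_cons, List.length_replicate]
    omega
  refine schurCoeff_hh_mul_schurJT hf (antitone_rows ?_) hfn (rows_of_length_le hlen) ?_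
  · have hrow : 2 ≤ k - 2 * i := by omega
    simp [List.pairwise_replicate, hrow]
  · rw [hsum, sum_rows hlen, List.sum_cons, List.sum_replicate, smul_eq_mul]
    omega

lemma isHorizontalStrip_cons_replicate_two_iff {l1 l2 j a i : ℕ} (h2 : 2 ≤ l2) :
    IsHorizontalStrip (rows (l1 :: l2 :: List.replicate j 2)) (rows (a :: List.replicate i 2)) ↔
      (l2 ≤ a ∧ a ≤ l1) ∧ (i = j ∨ i = j + 1) := by
  constructor
  · intro h
    have hlower : j ≤ i := by
      by_contra! hij
      simpa [rows_cons_succ, rows_replicate, hij] using (h (i + 1)).2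
    have hupper : i ≤ j + 1 := by
      by_contra! hij
      simpa [rows_cons_succ, rows_replicate, hij] using (h (j + 2)).1
    exact ⟨(h 0).symm, by omega⟩
  · rintro ⟨ha, hij⟩ (_ | _ | p)
    · exact ha.symm
    all_goals
      simp only [rows_cons_zero, rows_cons_succ, rows_replicate]
      split_ifs <;> omega

open Classical in
lemma card_isHorizontalStrip_cons_replicate_two {n l1 l2 j : ℕ} (h2 : 2 ≤ l2)
    (hn : l1 + 2 * j + 2 ≤ n) (i : ℕ) :
    Finset.card {k ∈ Finset.Icc (2 * i + 2) n | IsHorizontalStrip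
      (rows (l1 :: l2 :: List.replicate j 2)) (rows ((k - 2 * i) :: List.replicate i 2))} =
      if i = j ∨ i = j + 1 then l1 + 1 - l2 else 0 := by
  simp only [isHorizontalStrip_cons_replicate_two_iff h2]
  split_ifs with hi
  · have hIcc : {k ∈ Finset.Icc (2 * i + 2) n |
        (l2 ≤ k - 2 * i ∧ k - 2 * i ≤ l1) ∧ (i = j ∨ i = j + 1)} =
        Finset.Icc (l2 + 2 * i) (l1 + 2 * i) := by
      ext k
      simp only [Finset.mem_filter, Finset.mem_Icc]
      omega
    rw [hIcc, Nat.card_Icc]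
    omega
  · simp [hi]

end Coefficients

theorem coeff_of_sLambda_in_B_general (n l1 l2 j : ℕ) (h12 : l2 ≤ l1) (h2 : 2 ≤ l2)
    (lam : Nat.Partition n)
    (hlam : lam.parts.sort (· ≥ ·) = l1 :: l2 :: List.replicate j 2)
    (c : Nat.Partition n → Polynomial ℤ)
    (hc : Bpoly n = ∑ μ : Nat.Partition n,
        (c μ).map (Int.castRingHom (MvPolynomial ℕ ℤ)) * Polynomial.C (schurOfPartition μ)) :
    c lam = ((l1 : ℤ) - l2 + 1) • (Polynomial.X ^ (j + 2) + Polynomial.X ^ (j + 1)) := by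
  have hrows : rowLen lam = rows (l1 :: l2 :: List.replicate j 2) := by rw [rowLen, hlam]
  have hn : l1 + l2 + 2 * j = n := by
    rw [← sum_rowLen lam, hrows, sum_rows (hlam ▸ length_sort_parts_le lam)]
    simp only [List.sum_cons, List.sum_replicate, smul_eq_mul]
    ring
  ext d
  rw [coeff_eq_schurCoeff_coeff hc]
  cases d with
  | zero => simp [coeff_Bpoly_zero]
  | succ i =>
    rw [schurCoeff_coeff_Bpoly_succ (antitone_rowLen lam) (rowLen_of_le lam le_rfl)
      (sum_rowLen lam), hrows, card_isHorizontalStrip_cons_replicate_two h2 (by omega)]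
    simp only [Polynomial.coeff_smul, Polynomial.coeff_add, Polynomial.coeff_X_pow, smul_eq_mul]
    split_ifs <;> omega

/-- **Coefficient of `s_λ` in `B_n(x;t)` for `λ = (λ₁, λ₂, 2^j)` with `λ₁ ≥ λ₂ ≥ 2`, `j ≥ 1`:**
in any Schur expansion of `B_n`, the coefficient of `s_λ` equals
`(λ₁ - λ₂ + 1)(t^{j+2} + t^{j+1}) = (λ₁ - λ₂ + 1) t^{ℓ(λ)-1}(t+1)` (with `ℓ(λ) = j+2`). -/
theorem coeff_of_sLambda_in_B (n l1 l2 j : ℕ) (h12 : l2 ≤ l1) (h2 : 2 ≤ l2) (hj : 1 ≤ j)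
    (lam : Nat.Partition n)
    (hlam : lam.parts.sort (· ≥ ·) = l1 :: l2 :: List.replicate j 2)
    (c : Nat.Partition n → Polynomial ℤ)
    (hc : Bpoly n = ∑ μ : Nat.Partition n,
        (c μ).map (Int.castRingHom (MvPolynomial ℕ ℤ)) * Polynomial.C (schurOfPartition μ)) :
    c lam = ((l1 : ℤ) - l2 + 1) • (Polynomial.X ^ (j + 2) + Polynomial.X ^ (j + 1)) :=
  coeff_of_sLambda_in_B_general n l1 l2 j h12 h2 lam hlam c hc
end
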